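/- There is a computable function f from context-free grammars over the two-letter alphabet {b, c} (without ε-rules) to sequents of L⁺_ω such that for every such grammar G, the language generated by G includes (b⁺c⁺)⁺ = { b^{m₁} c^{k₁} … b^{mₙ} c^{kₙ} | n ≥ 1, all mᵢ, kⱼ ≥ 1 } if and only if the sequent f(G) is derivable in L⁺_ω. -/

import Mathlib

/-- Types (formulae) of the Lambek calculus with positive iteration:
primitive types, product `mul`, left division `ldiv A B = A \ B`,
right division `rdiv B A = B / A`, and positive iteration `plus A = A⁺`. -/
inductive Fm : Type where
  | pr : ℕ → Fm
  | mul : Fm → Fm → Fm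
  | ldiv : Fm → Fm → Fm   -- `ldiv A B` is `A \ B`
  | rdiv : Fm → Fm → Fm   -- `rdiv B A` is `B / A`
  | plus : Fm → Fm

/-- Derivability in the infinitary calculus L⁺_ω.  `DerLw P A` means the sequent
`P → A` is derivable.  Derivations are well-founded trees; the rule `plus_l`
is the ω-rule with infinitely many premises. -/
inductive DerLw : List Fm → Fm → Prop where
  | ax (A : Fm) : DerLw [A] A
  | ldiv_r {P : List Fm} {A B : Fm} (hne : P ≠ []) :
      DerLw (A :: P) B → DerLw P (Fm.ldiv A B)
  | ldiv_l {P Γ Δ : List Fm} {A B C : Fm} :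
      DerLw P A → DerLw (Γ ++ B :: Δ) C →
      DerLw (Γ ++ P ++ Fm.ldiv A B :: Δ) C
  | rdiv_r {P : List Fm} {A B : Fm} (hne : P ≠ []) :
      DerLw (P ++ [A]) B → DerLw P (Fm.rdiv B A)
  | rdiv_l {P Γ Δ : List Fm} {A B C : Fm} :
      DerLw P A → DerLw (Γ ++ B :: Δ) C →
      DerLw (Γ ++ Fm.rdiv B A :: (P ++ Δ)) C
  | mul_r {Γ Δ : List Fm} {A B : Fm} :
      DerLw Γ A → DerLw Δ B → DerLw (Γ ++ Δ) (Fm.mul A B)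
  | mul_l {Γ Δ : List Fm} {A B C : Fm} :
      DerLw (Γ ++ A :: B :: Δ) C → DerLw (Γ ++ Fm.mul A B :: Δ) C
  | plus_r {A : Fm} (Ps : List (List Fm)) (hne : Ps ≠ []) :
      (∀ P ∈ Ps, DerLw P A) → DerLw Ps.flatten (Fm.plus A)
  | plus_l {Γ Δ : List Fm} {A C : Fm} :
      (∀ n : ℕ, 1 ≤ n → DerLw (Γ ++ List.replicate n A ++ Δ) C) →
      DerLw (Γ ++ Fm.plus A :: Δ) C

/-- Symbols of a context-free grammar over the two-letter alphabet `Bool`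
(`false` plays the role of `b`, `true` of `c`): terminals are `Sum.inl`,
nonterminals (numbered by naturals) are `Sum.inr`. -/
abbrev GSym : Type := Bool ⊕ ℕ

/-- A context-free grammar over `{b, c}`: a start nonterminal together with a
finite list of rules, each rewriting a nonterminal to a string of symbols. -/
abbrev CFG : Type := ℕ × List (ℕ × List GSym)

/-- One rewriting step of the grammar `G`. -/
def CFGStep (G : CFG) (x y : List GSym) : Prop :=
  ∃ r ∈ G.2, ∃ p q : List GSym, x = p ++ Sum.inr r.1 :: q ∧ y = p ++ r.2 ++ q

/-- The language generated by the grammar `G`. -/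
def Lang (G : CFG) : Set (List Bool) :=
  { w | Relation.ReflTransGen (CFGStep G) [Sum.inr G.1] (w.map Sum.inl) }

/-- `G` has no ε-rules. -/
def EpsFree (G : CFG) : Prop := ∀ r ∈ G.2, r.2 ≠ []

/-- The language `(b⁺c⁺)⁺ = { b^{m₁} c^{k₁} … b^{mₙ} c^{kₙ} | n ≥ 1, mᵢ, kⱼ ≥ 1 }`
over `{b, c}` (with `b = false`, `c = true`). -/
def AltLang : Set (List Bool) :=
  { w | ∃ l : List (ℕ × ℕ), l ≠ [] ∧ (∀ p ∈ l, 1 ≤ p.1 ∧ 1 ≤ p.2) ∧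
      w = (l.map fun p => List.replicate p.1 false ++ List.replicate p.2 true).flatten }

/-- A fixed effective Gödel numbering of types. -/
def encodeFm : Fm → ℕ
  | Fm.pr n => Nat.pair 0 n
  | Fm.mul A B => Nat.pair 1 (Nat.pair (encodeFm A) (encodeFm B))
  | Fm.ldiv A B => Nat.pair 2 (Nat.pair (encodeFm A) (encodeFm B))
  | Fm.rdiv A B => Nat.pair 3 (Nat.pair (encodeFm A) (encodeFm B))
  | Fm.plus A => Nat.pair 4 (encodeFm A)

/-- A fixed effective Gödel numbering of sequents `S.1 → S.2`. -/
def encodeSeq (S : List Fm × Fm) : ℕ :=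
  Nat.pair (Encodable.encode (S.1.map encodeFm)) (encodeFm S.2)

namespace AltRed

/-- Grammar symbols `Sum.inl X`, together with pairs `Sum.inr (A, X)` standing for the set of
words `u` such that `A` derives `u X`. -/
abbrev NT : Type := GSym ⊕ (ℕ × GSym)

/-- Rules over the extended set of nonterminals. -/
abbrev Rule : Type := NT × List NT

/-- The primitive type carrying the whole state of the parse. -/
def start : Fm := Fm.pr 0

/-- The primitive type announcing the symbol `X`. -/
def code (X : NT) : Fm := Fm.pr (Encodable.encode X + 1)

/-- The type of a completed phrase of category `X`. -/
def hat (X : NT) : Fm := Fm.ldiv (Fm.mul start (code X)) start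

/-- The type of an announced left-hand side followed by phrases for the right-hand side. -/
def body (r : Rule) : Fm := (r.2.map hat).foldl Fm.mul (code r.1)

/-- The type allowing the rule `r` to be applied, or to be skipped. -/
def trig (r : Rule) : Fm :=
  Fm.ldiv (Fm.rdiv (Fm.mul start (Fm.plus (body r))) (body r)) start

/-- A nonempty context `v` that behaves as a phrase of category `X`. -/
def Phr (X : NT) (v : List Fm) : Prop := v ≠ [] ∧ DerLw (start :: code X :: v) start

theorem derLw_foldl_mul {Γ : List Fm} {F : Fm} (hF : DerLw Γ F) {vs : List (List Fm)}
    {Fs : List Fm} (h : List.Forall₂ DerLw vs Fs) :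
    DerLw (Γ ++ vs.flatten) (Fs.foldl Fm.mul F) := by
  induction h generalizing Γ F with
  | nil => simpa using hF
  | cons h _ ih => simpa using ih (DerLw.mul_r hF h)

theorem derLw_foldl_mul_left {Γ Δ Fs : List Fm} {F C : Fm}
    (h : DerLw (Γ ++ F :: (Fs ++ Δ)) C) : DerLw (Γ ++ Fs.foldl Fm.mul F :: Δ) C := by
  induction Fs generalizing F with
  | nil => simpa using h
  | cons A Fs ih => exact ih (DerLw.mul_l h)

theorem derLw_plus_self {Γ : List Fm} {A : Fm} (h : DerLw Γ A) : DerLw Γ (Fm.plus A) := by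
  simpa using DerLw.plus_r (A := A) [Γ] (by simp) (by simpa using h)

theorem Phr.derLw_hat {X : NT} {v : List Fm} (h : Phr X v) : DerLw v (hat X) :=
  DerLw.ldiv_r h.1 (DerLw.mul_l (Γ := []) h.2)

theorem phr_hat (X : NT) : Phr X [hat X] :=
  ⟨by simp, DerLw.ldiv_l (P := [start, code X]) (Γ := []) (Δ := [])
    (DerLw.mul_r (Γ := [start]) (DerLw.ax _) (DerLw.ax _)) (DerLw.ax _)⟩

theorem Phr.append_trig {X : NT} {v : List Fm} (h : Phr X v) (r : Rule) :
    Phr X (v ++ [trig r]) := by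
  refine ⟨by simp, ?_⟩
  exact DerLw.ldiv_l (P := start :: code X :: v) (Γ := []) (Δ := [])
    (DerLw.rdiv_r (by simp) (DerLw.mul_r h.2 (derLw_plus_self (DerLw.ax _)))) (DerLw.ax _)

theorem phr_of_rule {r : Rule} {vs : List (List Fm)} (h : List.Forall₂ Phr r.2 vs) :
    Phr r.1 (vs.flatten ++ [trig r]) := by
  refine ⟨by simp, ?_⟩
  have hb : DerLw (code r.1 :: vs.flatten) (body r) := by
    refine derLw_foldl_mul (Γ := [code r.1]) (DerLw.ax _) ?_
    rw [List.forall₂_map_right_iff]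
    exact h.flip.imp fun _ _ h => Phr.derLw_hat h
  have hp : DerLw (code r.1 :: vs.flatten ++ [body r]) (Fm.plus (body r)) := by
    have := DerLw.plus_r (A := body r) [code r.1 :: vs.flatten, [body r]] (by simp) (by
      simpa using ⟨hb, DerLw.ax _⟩)
    simpa using this
  exact DerLw.ldiv_l (P := start :: code r.1 :: vs.flatten) (Γ := []) (Δ := [])
    (DerLw.rdiv_r (by simp) (DerLw.mul_r (Γ := [start]) (DerLw.ax _) hp)) (DerLw.ax _)

/-- The block of types attached to the letter `a`. -/
def block (rs : List Rule) (a : Bool) : List Fm := hat (Sum.inl (Sum.inl a)) :: rs.map trig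

/-- A word `w` is a phrase of category `X` when the rules of its last block are cut to `pre`. -/
def Ph (rs pre : List Rule) (X : NT) (w : List Bool) : Prop :=
  ∃ w₀ a, w = w₀ ++ [a] ∧ Phr X (w₀.flatMap (block rs) ++ block pre a)

theorem Ph.phr {rs : List Rule} {X : NT} {w : List Bool} (h : Ph rs rs X w) :
    Phr X (w.flatMap (block rs)) := by
  obtain ⟨w₀, a, rfl, h⟩ := h
  simpa using h

theorem ph_letter (rs : List Rule) (a : Bool) : Ph rs [] (Sum.inl (Sum.inl a)) [a] :=
  ⟨[], a, rfl, phr_hat _⟩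

theorem Ph.append {rs pre : List Rule} {X : NT} {w : List Bool} (h : Ph rs pre X w)
    (sec : List Rule) : Ph rs (pre ++ sec) X w := by
  obtain ⟨w₀, a, rfl, h⟩ := h
  refine ⟨w₀, a, rfl, ?_⟩
  induction sec generalizing pre with
  | nil => simpa using h
  | cons r sec ih =>
    have := ih (pre := pre ++ [r]) (by simpa [block] using h.append_trig r)
    simpa using this

theorem ph_of_rule {rs pre sec : List Rule} {A X : NT} {Xs : List NT} {ws : List (List Bool)}
    {w : List Bool} (hr : (A, Xs ++ [X]) ∈ sec) (hs : List.Forall₂ (Ph rs rs) Xs ws)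
    (h : Ph rs pre X w) : Ph rs (pre ++ sec) A (ws.flatten ++ w) := by
  obtain ⟨s₁, s₂, rfl⟩ := List.append_of_mem hr
  have h₁ := h.append s₁
  obtain ⟨w₀, a, rfl, h₁⟩ := h₁
  have h₂ : Ph rs (pre ++ s₁ ++ [(A, Xs ++ [X])]) A (ws.flatten ++ (w₀ ++ [a])) := by
    refine ⟨ws.flatten ++ w₀, a, by simp, ?_⟩
    have := phr_of_rule (r := (A, Xs ++ [X]))
      (vs := ws.map (fun w => w.flatMap (block rs)) ++
        [w₀.flatMap (block rs) ++ block (pre ++ s₁) a])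
      (List.rel_append (List.forall₂_map_right_iff.2 (hs.imp fun _ _ h => h.phr))
        (by simpa using h₁))
    have e : (ws.map (fun w => w.flatMap (block rs))).flatten = ws.flatten.flatMap (block rs) := by
      clear hs this
      induction ws <;> simp_all
    simpa [block, e] using this
  simpa using h₂.append s₂

/-- Reachability by the unary rules of `L`. -/
abbrev Chain (L : List Rule) : NT → NT → Prop :=
  Relation.ReflTransGen fun x y => (y, [x]) ∈ L

/-- A list of rules containing every repetition-free sequence of rules of `L` as a sublist. -/
def allOrders (L : List Rule) : List Rule := L.foldr (fun r acc => acc ++ r :: acc) []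

theorem chain_cons {r : Rule} {L : List Rule} {x y : NT} (h : Chain (r :: L) x y) :
    Chain L x y ∨ ∃ z, r.2 = [z] ∧ Chain L x z ∧ Chain L r.1 y := by
  induction h with
  | refl => exact Or.inl .refl
  | tail _ hs ih =>
    rcases List.mem_cons.1 hs with rfl | hs
    · rcases ih with ih | ⟨z, hz, h₁, _⟩
      · exact Or.inr ⟨_, rfl, ih, .refl⟩
      · exact Or.inr ⟨z, hz, h₁, .refl⟩
    · rcases ih with ih | ⟨z, hz, h₁, h₂⟩
      · exact Or.inl (ih.tail hs)
      · exact Or.inr ⟨z, hz, h₁, h₂.tail hs⟩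

theorem Ph.chain {rs pre L : List Rule} {x y : NT} {w : List Bool} (h : Ph rs pre x w)
    (hc : Chain L x y) : Ph rs (pre ++ allOrders L) y w := by
  induction L generalizing pre x y with
  | nil =>
    have : x = y := by
      induction hc with
      | refl => rfl
      | tail _ hs _ => simp at hs
    subst this
    exact h.append _
  | cons r L ih =>
    have e : allOrders (r :: L) = allOrders L ++ ([r] ++ allOrders L) := rfl
    rw [e, ← List.append_assoc, ← List.append_assoc]
    rcases chain_cons hc with hc | ⟨z, hz, h₁, h₂⟩
    · exact ((ih h hc).append _).append _
    · refine ih ?_ h₂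
      have := ph_of_rule (A := r.1) (Xs := []) (sec := [r]) (by simp [← hz]) .nil (ih h h₁)
      simpa using this

/-- Yields of sentential forms of a grammar. -/
inductive Gen (G : CFG) : List GSym → List Bool → Prop where
  | nil : Gen G [] []
  | letter {a : Bool} {α : List GSym} {w : List Bool} :
      Gen G α w → Gen G (Sum.inl a :: α) (a :: w)
  | rule {r : ℕ × List GSym} {α : List GSym} {u v : List Bool} :
      r ∈ G.2 → Gen G r.2 u → Gen G α v → Gen G (Sum.inr r.1 :: α) (u ++ v)

theorem Gen.append {G : CFG} {α β : List GSym} {u v : List Bool} (h : Gen G α u)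
    (h' : Gen G β v) : Gen G (α ++ β) (u ++ v) := by
  induction h with
  | nil => exact h'
  | letter _ ih => exact .letter ih
  | rule hr h₁ _ _ ih => simpa using Gen.rule hr h₁ ih

theorem Gen.split {G : CFG} {α β : List GSym} {w : List Bool} (h : Gen G (α ++ β) w) :
    ∃ u v, w = u ++ v ∧ Gen G α u ∧ Gen G β v := by
  induction α generalizing w with
  | nil => exact ⟨[], w, rfl, .nil, h⟩
  | cons X α ih =>
    cases h with
    | letter h =>
      obtain ⟨u, v, rfl, hu, hv⟩ := ih h
      exact ⟨_, v, rfl, .letter hu, hv⟩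
    | rule hr h₁ h =>
      obtain ⟨u, v, rfl, hu, hv⟩ := ih h
      exact ⟨_, v, by simp, .rule hr h₁ hu, hv⟩

theorem gen_letters (G : CFG) (w : List Bool) : Gen G (w.map Sum.inl) w := by
  induction w with
  | nil => exact .nil
  | cons a w ih => exact .letter ih

theorem gen_of_reduces {G : CFG} {α : List GSym} {w : List Bool}
    (h : Relation.ReflTransGen (CFGStep G) α (w.map Sum.inl)) : Gen G α w := by
  induction h using Relation.ReflTransGen.head_induction_on with
  | refl => exact gen_letters G w
  | head hs _ ih =>
    obtain ⟨r, hr, p, q, rfl, rfl⟩ := hs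
    obtain ⟨u, v, rfl, hu, hv⟩ := ih.split
    obtain ⟨u₁, u₂, rfl, hu₁, hu₂⟩ := hu.split
    simpa using hu₁.append (Gen.rule hr hu₂ hv)

theorem reduces_append_left {G : CFG} {α β : List GSym} (γ : List GSym)
    (h : Relation.ReflTransGen (CFGStep G) α β) :
    Relation.ReflTransGen (CFGStep G) (γ ++ α) (γ ++ β) := by
  refine h.lift (fun x => γ ++ x) ?_
  rintro _ _ ⟨r, hr, p, q, rfl, rfl⟩
  exact ⟨r, hr, γ ++ p, q, by simp, by simp⟩

theorem reduces_append_right {G : CFG} {α β : List GSym} (γ : List GSym)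
    (h : Relation.ReflTransGen (CFGStep G) α β) :
    Relation.ReflTransGen (CFGStep G) (α ++ γ) (β ++ γ) := by
  refine h.lift (fun x => x ++ γ) ?_
  rintro _ _ ⟨r, hr, p, q, rfl, rfl⟩
  exact ⟨r, hr, p, q ++ γ, by simp, by simp⟩

theorem Gen.reduces {G : CFG} {α : List GSym} {w : List Bool} (h : Gen G α w) :
    Relation.ReflTransGen (CFGStep G) α (w.map Sum.inl) := by
  induction h with
  | nil => exact .refl
  | letter _ ih => exact reduces_append_left [_] ih
  | @rule r α u v hr _ _ ih₁ ih₂ =>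
    have h₁ : Relation.ReflTransGen (CFGStep G) (Sum.inr r.1 :: α) (r.2 ++ α) :=
      .single ⟨r, hr, [], α, rfl, rfl⟩
    rw [List.map_append]
    exact h₁.trans ((reduces_append_right α ih₁).trans (reduces_append_left _ ih₂))

theorem mem_lang_iff {G : CFG} {w : List Bool} : w ∈ Lang G ↔ Gen G [Sum.inr G.1] w :=
  ⟨gen_of_reduces, Gen.reduces⟩

/-- A grammar symbol as an extended nonterminal. -/
abbrev sym (X : GSym) : NT := Sum.inl X

/-- The extended nonterminal of the words `u` such that `A` derives `u X`. -/
abbrev pair (A : ℕ) (X : GSym) : NT := Sum.inr (A, X)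

/-- The last symbol of the right-hand side of a rule. -/
def lastSym (r : ℕ × List GSym) : GSym := r.2.reverse.headI

/-- The right-hand side of a rule without its last symbol. -/
def initSyms (r : ℕ × List GSym) : List GSym := r.2.reverse.tail.reverse

theorem initSyms_append_lastSym {r : ℕ × List GSym} (h : r.2 ≠ []) :
    initSyms r ++ [lastSym r] = r.2 := by
  obtain ⟨β, X, hX⟩ := List.eq_nil_or_concat' r.2 |>.resolve_left h
  simp [initSyms, lastSym, hX]

/-- Rules closing a pair at a terminal. -/
def closeRules (G : CFG) : List Rule :=
  G.2.flatMap fun r =>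
    [(sym (Sum.inr r.1), [pair r.1 (Sum.inl false), sym (Sum.inl false)]),
      (sym (Sum.inr r.1), [pair r.1 (Sum.inl true), sym (Sum.inl true)])]

/-- The rules of the grammar itself. -/
def ownRules (G : CFG) : List Rule :=
  G.2.map fun r => (sym (Sum.inr r.1), r.2.map sym)

/-- Rules opening a pair. -/
def openRules (G : CFG) : List Rule :=
  G.2.map fun r => (pair r.1 (lastSym r), (initSyms r).map sym)

/-- Rules extending a pair. -/
def extendRules (G : CFG) : List Rule :=
  G.2.flatMap fun q => G.2.map fun r =>
    (pair q.1 (lastSym r), pair q.1 (Sum.inr r.1) :: (initSyms r).map sym)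

/-- The rules listed in every block, in an order which lets each word be parsed. -/
def rules (G : CFG) : List Rule :=
  closeRules G ++ allOrders (ownRules G) ++ (openRules G ++ extendRules G) ++
    allOrders (extendRules G)

/-- `w` is a phrase of category `X` before the unary rules of the grammar are used. -/
def SymPh (G : CFG) (X : GSym) (w : List Bool) : Prop :=
  ∃ Y, Ph (rules G) (closeRules G) (sym Y) w ∧ Chain (ownRules G) (sym Y) (sym X)

/-- `u` is a phrase of category `pair A X` before the unary pair rules are used. -/
def PairPh (G : CFG) (A : ℕ) (X : GSym) (u : List Bool) : Prop :=
  ∃ Y, Ph (rules G) (closeRules G ++ allOrders (ownRules G) ++ (openRules G ++ extendRules G))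
    (pair A Y) u ∧ Chain (extendRules G) (pair A Y) (pair A X)

theorem SymPh.ph {G : CFG} {X : GSym} {w : List Bool} (h : SymPh G X w) :
    Ph (rules G) (closeRules G ++ allOrders (ownRules G)) (sym X) w := by
  obtain ⟨Y, h, hc⟩ := h
  exact h.chain hc

theorem SymPh.full {G : CFG} {X : GSym} {w : List Bool} (h : SymPh G X w) :
    Ph (rules G) (rules G) (sym X) w :=
  (h.ph.append _).append _

theorem PairPh.full {G : CFG} {A : ℕ} {X : GSym} {u : List Bool} (h : PairPh G A X u) :
    Ph (rules G) (rules G) (pair A X) u := by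
  obtain ⟨Y, h, hc⟩ := h
  exact h.chain hc

/-- `w` is a phrase of category `X` and completes pairs waiting for `X`. -/
def Good (G : CFG) (X : GSym) (w : List Bool) : Prop :=
  SymPh G X w ∧ ∀ r ∈ G.2, ∀ u, PairPh G r.1 X u → SymPh G (Sum.inr r.1) (u ++ w)

theorem good_letter (G : CFG) (a : Bool) : Good G (Sum.inl a) [a] := by
  refine ⟨⟨_, (ph_letter (rules G) a).append (closeRules G), .refl⟩, fun r hr u hu => ?_⟩
  refine ⟨Sum.inr r.1, ?_, .refl⟩
  have := ph_of_rule (sec := closeRules G) (A := sym (Sum.inr r.1)) (X := sym (Sum.inl a))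
    (Xs := [pair r.1 (Sum.inl a)]) (ws := [u]) (by
      refine List.mem_flatMap.2 ⟨r, hr, ?_⟩
      cases a <;> simp) (.cons hu.full .nil) (ph_letter (rules G) a)
  simpa using this

theorem extend_mem {G : CFG} {q r : ℕ × List GSym} {β : List GSym} {X : GSym} (hq : q ∈ G.2)
    (hr : r ∈ G.2) (e : r.2 = β ++ [X]) :
    (pair q.1 X, pair q.1 (Sum.inr r.1) :: β.map sym) ∈ extendRules G :=
  List.mem_flatMap.2 ⟨q, hq, List.mem_map.2 ⟨r, hr, by simp [lastSym, initSyms, e]⟩⟩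

theorem exists_of_forall₂_concat {α β : Type*} {R : α → β → Prop} {l : List α} {x : α}
    {ys : List β} (h : List.Forall₂ R (l ++ [x]) ys) :
    ∃ ys' y, List.Forall₂ R l ys' ∧ R x y ∧ ys = ys' ++ [y] := by
  induction l generalizing ys with
  | nil =>
    cases h with
    | cons h h' => cases h'; exact ⟨[], _, .nil, h, rfl⟩
  | cons a l ih =>
    cases h with
    | cons h h' =>
      obtain ⟨ys', y, h₁, h₂, rfl⟩ := ih h'
      exact ⟨_, y, .cons h h₁, h₂, rfl⟩

theorem good_rule {G : CFG} (hG : EpsFree G) {r : ℕ × List GSym} (hr : r ∈ G.2)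
    {ws : List (List Bool)} (h : List.Forall₂ (Good G) r.2 ws) :
    Good G (Sum.inr r.1) ws.flatten := by
  obtain ⟨β, X, e⟩ := List.eq_nil_or_concat' r.2 |>.resolve_left (hG r hr)
  rw [e] at h
  obtain ⟨wsβ, w, hβ, hX, rfl⟩ := exists_of_forall₂_concat h
  rcases List.eq_nil_or_concat' β with rfl | ⟨β', Z, rfl⟩
  · cases hβ
    refine ⟨?_, fun q hq u hu => ?_⟩
    · obtain ⟨Y, hY, hc⟩ := hX.1
      refine ⟨Y, by simpa using hY, hc.tail ?_⟩
      exact List.mem_map.2 ⟨r, hr, by simp [e]⟩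
    · have := hX.2 q hq u (by
        obtain ⟨Y, hY, hc⟩ := hu
        exact ⟨Y, hY, hc.tail (extend_mem hq hr e)⟩)
      simpa using this
  · obtain ⟨ws', z, hβ', hZ, rfl⟩ := exists_of_forall₂_concat hβ
    have hfull : List.Forall₂ (Ph (rules G) (rules G)) (β'.map sym) ws' :=
      List.forall₂_map_left_iff.2 (hβ'.imp fun _ _ h => h.1.full)
    refine ⟨?_, fun q hq u hu => ?_⟩
    · have := hX.2 r hr (ws'.flatten ++ z) ⟨X, ph_of_rule (A := pair r.1 X) (X := sym Z)
        (Xs := β'.map sym) (List.mem_append_left _ (List.mem_map.2 ⟨r, hr, by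
          simp [lastSym, initSyms, e]⟩)) hfull hZ.1.ph, .refl⟩
      simpa using this
    · have := hX.2 q hq ((u :: ws').flatten ++ z) ⟨X, ph_of_rule (A := pair q.1 X) (X := sym Z)
        (Xs := pair q.1 (Sum.inr r.1) :: β'.map sym) (List.mem_append_right _ (by
          simpa using extend_mem hq hr e)) (.cons hu.full hfull) hZ.1.ph, .refl⟩
      simpa using this

theorem Gen.good {G : CFG} (hG : EpsFree G) {α : List GSym} {w : List Bool} (h : Gen G α w) :
    ∃ ws, List.Forall₂ (Good G) α ws ∧ w = ws.flatten := by
  induction h with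
  | nil => exact ⟨[], .nil, rfl⟩
  | letter _ ih =>
    obtain ⟨ws, h, rfl⟩ := ih
    exact ⟨[_] :: ws, .cons (good_letter G _) h, rfl⟩
  | rule hr _ _ ih₁ ih₂ =>
    obtain ⟨us, hu, rfl⟩ := ih₁
    obtain ⟨ws, h, rfl⟩ := ih₂
    exact ⟨us.flatten :: ws, .cons (good_rule hG hr hu) h, rfl⟩

theorem derLw_of_mem_lang {G : CFG} (hG : EpsFree G) {w : List Bool} (h : w ∈ Lang G) :
    DerLw (start :: code (sym (Sum.inr G.1)) :: w.flatMap (block (rules G))) start := by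
  obtain ⟨ws, hws, rfl⟩ := (mem_lang_iff.1 h).good hG
  cases hws with
  | cons hg hnil =>
    cases hnil
    simpa using hg.1.full.phr.2

/-- The product of the types of a block. -/
def blockFm (rs : List Rule) (a : Bool) : Fm :=
  (rs.map trig).foldl Fm.mul (hat (sym (Sum.inl a)))

/-- The type of one group of letters. -/
def groupFm (rs : List Rule) : Fm :=
  Fm.mul (Fm.plus (blockFm rs false)) (Fm.plus (blockFm rs true))

/-- The sequent attached to a grammar. -/
def toSequent (G : CFG) : List Fm × Fm :=
  ([start, code (sym (Sum.inr G.1)), Fm.plus (groupFm (rules G))], start)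

theorem derLw_replicate_block {rs : List Rule} {a : Bool} {Γ Δ : List Fm} {C : Fm} {n : ℕ}
    (h : DerLw (Γ ++ (List.replicate n a).flatMap (block rs) ++ Δ) C) :
    DerLw (Γ ++ List.replicate n (blockFm rs a) ++ Δ) C := by
  induction n generalizing Γ with
  | zero => simpa using h
  | succ n ih =>
    have h₁ := ih (Γ := Γ ++ block rs a) (by simpa [List.replicate_succ] using h)
    have h₂ := derLw_foldl_mul_left (Γ := Γ) (F := hat (sym (Sum.inl a))) (Fs := rs.map trig)
      (Δ := List.replicate n (blockFm rs a) ++ Δ) (by simpa [block] using h₁)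
    simpa [List.replicate_succ, blockFm] using h₂

/-- The word made of the groups `b^m c^k` for the pairs `(m, k)` of a list. -/
def groupWord (l : List (ℕ × ℕ)) : List Bool :=
  (l.map fun p => List.replicate p.1 false ++ List.replicate p.2 true).flatten

theorem derLw_replicate_group {rs : List Rule} {Γ Δ : List Fm} {C : Fm} {n : ℕ}
    (h : ∀ l : List (ℕ × ℕ), l.length = n → (∀ p ∈ l, 1 ≤ p.1 ∧ 1 ≤ p.2) →
      DerLw (Γ ++ (groupWord l).flatMap (block rs) ++ Δ) C) :
    DerLw (Γ ++ List.replicate n (groupFm rs) ++ Δ) C := by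
  induction n generalizing Γ with
  | zero => simpa [groupWord] using h [] rfl (by simp)
  | succ n ih =>
    suffices DerLw (Γ ++ Fm.plus (blockFm rs false) :: Fm.plus (blockFm rs true) ::
        (List.replicate n (groupFm rs) ++ Δ)) C by
      simpa [List.replicate_succ, groupFm] using DerLw.mul_l this
    refine DerLw.plus_l fun m hm => ?_
    refine DerLw.plus_l fun k hk => ?_
    refine derLw_replicate_block ?_
    have := derLw_replicate_block (rs := rs) (a := false) (n := m) (Γ := Γ) (C := C)
      (Δ := (List.replicate k true).flatMap (block rs) ++ (List.replicate n (groupFm rs) ++ Δ)) ?_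
    · simpa using this
    · have := ih (Γ := Γ ++ (List.replicate m false).flatMap (block rs) ++
        (List.replicate k true).flatMap (block rs)) (fun l hl hp => by
          have := h ((m, k) :: l) (by simp [hl]) (by
            simp only [List.mem_cons]
            rintro p (rfl | hp')
            · exact ⟨hm, hk⟩
            · exact hp p hp')
          simpa [groupWord] using this)
      simpa using this

theorem derLw_toSequent {G : CFG} (hG : EpsFree G) (h : AltLang ⊆ Lang G) :
    DerLw (toSequent G).1 (toSequent G).2 := by
  refine DerLw.plus_l (Γ := [start, code (sym (Sum.inr G.1))]) (Δ := []) fun n hn => ?_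
  refine derLw_replicate_group fun l hl hp => ?_
  have := derLw_of_mem_lang hG (h (show groupWord l ∈ AltLang from
    ⟨l, by rintro rfl; simp at hl; omega, hp, rfl⟩))
  simpa [toSequent] using this

/-- Tokens of the language model. -/
inductive Tok : Type where
  | root : Tok
  | call : NT → Tok
  | leaf : NT → Tok
  | fire : Rule → Tok

/-- The categories of token words in the language model. -/
inductive Cat : Type where
  | one : Option NT → Cat
  | many : List NT → Cat
  | rep : Rule → Cat

open Tok Cat

/-- The token words of each category: `one none` for complete states, `one (some X)` for phrases
of category `X`, `many Xs` for sequences of phrases, `rep r` for sequences of unfinished calls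
of the rule `r`. -/
inductive V : Cat → List Tok → Prop where
  | start : V (one none) [root]
  | gen (X : NT) : V (one (some X)) [leaf X]
  | piece {o : Option NT} {Y : NT} {v v' : List Tok} :
      V (one o) v → V (one (some Y)) v' → V (one o) (v ++ call Y :: v')
  | vain {o : Option NT} {v : List Tok} (r : Rule) : V (one o) v → V (one o) (v ++ [fire r])
  | nil : V (many []) []
  | cons {X : NT} {Xs : List NT} {v w : List Tok} :
      V (one (some X)) v → V (many Xs) w → V (many (X :: Xs)) (v ++ w)
  | rnil (r : Rule) : V (rep r) []
  | rsnoc {r : Rule} {y m : List Tok} :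
      V (rep r) y → V (many r.2) m → V (rep r) (y ++ call r.1 :: m)
  | real {r : Rule} {m u : List Tok} :
      V (many r.2) m → V (rep r) u → V (one (some r.1)) (m ++ u ++ [fire r])

theorem V.ne_nil {o : Option NT} {v : List Tok} (h : V (one o) v) : v ≠ [] := by
  cases h <;> simp

theorem V.length_le {Xs : List NT} {m : List Tok} (h : V (many Xs) m) : Xs.length ≤ m.length := by
  induction Xs generalizing m with
  | nil => simp
  | cons X Xs ih =>
    cases h with
    | cons h₁ h₂ =>
      have := List.length_pos_iff.2 h₁.ne_nil
      have := ih h₂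
      simp
      omega

theorem V.of_root_call {X : NT} {v : List Tok} (h : V (one none) (root :: call X :: v)) :
    V (one (some X)) v := by
  generalize hi : one none = i at h
  generalize hx : root :: call X :: v = x at h
  induction h generalizing v with
  | start => simp at hx
  | @piece o Y v₁ v₂ h₁ h₂ ih _ =>
    rcases v₁ with _ | ⟨a, _ | ⟨b, v₁⟩⟩
    · exact absurd rfl h₁.ne_nil
    · simp at hx
      obtain ⟨-, rfl, rfl⟩ := hx
      exact h₂
    · simp at hx
      obtain ⟨rfl, rfl, rfl⟩ := hx
      exact (ih hi rfl).piece h₂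
  | @vain o v₁ r h₁ ih =>
    rcases v₁ with _ | ⟨a, _ | ⟨b, v₁⟩⟩
    · exact absurd rfl h₁.ne_nil
    · simp at hx
    · simp at hx
      obtain ⟨rfl, rfl, rfl⟩ := hx
      exact (ih hi rfl).vain r
  | _ => simp at hi

theorem V.of_concat_leaf {o : Option NT} {v : List Tok} {Z : NT}
    (h : V (one o) (v ++ [leaf Z])) :
    (v = [] ∧ o = some Z) ∨ ∃ w, v = w ++ [call Z] ∧ V (one o) w := by
  generalize hi : one o = i at h
  generalize hx : v ++ [leaf Z] = x at h
  induction h generalizing v o with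
  | start => simp [List.append_eq_cons_iff] at hx
  | gen X =>
    left
    rcases v with _ | ⟨a, v⟩
    · simp_all
    · simp at hx
  | @piece o' Y v₁ v₂ h₁ h₂ _ ih =>
    right
    obtain ⟨v₃, b, rfl⟩ := List.eq_nil_or_concat' v₂ |>.resolve_left h₂.ne_nil
    have hx' : v ++ [leaf Z] = (v₁ ++ call Y :: v₃) ++ [b] := by simpa using hx
    obtain ⟨rfl, hb⟩ := List.append_inj' hx' rfl
    cases hb
    cases hi
    rcases ih rfl rfl with ⟨rfl, h⟩ | ⟨w, rfl, hw⟩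
    · cases h
      exact ⟨v₁, rfl, h₁⟩
    · exact ⟨v₁ ++ call Y :: w, by simp, h₁.piece hw⟩
  | vain r _ _ => exact absurd (List.append_inj' hx rfl).2 (by simp)
  | real _ _ _ _ => exact absurd (List.append_inj' hx rfl).2 (by simp)
  | _ => simp at hi

theorem V.of_append_leaves {Xs : List NT} {q : List Tok} (h : V (many Xs) (q ++ Xs.map leaf))
    (hq : q ≠ []) :
    ∃ X Xs', Xs = X :: Xs' ∧ ∃ w, q = w ++ [call X] ∧ V (one (some X)) w := by
  induction Xs generalizing q with
  | nil =>
    generalize hx : q ++ List.map leaf [] = x at h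
    cases h
    simp_all
  | cons X Xs ih =>
    refine ⟨X, Xs, rfl, ?_⟩
    generalize hx : q ++ (X :: Xs).map leaf = x at h
    cases h with
    | @cons _ _ v w h₁ h₂ =>
      have hx' : (q ++ [leaf X]) ++ Xs.map leaf = v ++ w := by simpa using hx
      have hl := h₂.length_le
      rcases List.append_eq_append_iff.1 hx' with ⟨a, ha, hb⟩ | ⟨a, ha, hb⟩
      · have : a = [] := by
          have := congrArg List.length hb
          simp at this
          exact List.length_eq_zero_iff.1 (by omega)
        subst this
        rw [List.append_nil] at ha
        subst ha
        exact (h₁.of_concat_leaf.resolve_left fun h => hq h.1)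
      · subst hb
        by_cases ha' : a = []
        · subst ha'
          rw [List.append_nil] at ha
          subst ha
          exact (h₁.of_concat_leaf.resolve_left fun h => hq h.1)
        · obtain ⟨Y, _, rfl, w', rfl, _⟩ := ih h₂ ha'
          rw [← List.append_assoc] at ha
          exact absurd (List.append_inj' ha rfl).2 (by simp)

theorem V.absorb {Xs : List NT} {m w : List Tok} {Y : NT} (h : V (many Xs) m) (hne : Xs ≠ [])
    (hw : V (one (some Y)) w) : V (many Xs) (m ++ call Y :: w) := by
  induction Xs generalizing m with
  | nil => exact absurd rfl hne
  | cons X Xs ih =>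
    cases h with
    | cons h₁ h₂ =>
      by_cases hXs : Xs = []
      · subst hXs
        cases h₂
        simpa using (h₁.piece hw).cons .nil
      · simpa using h₁.cons (ih h₂ hXs)

theorem V.rep_head {r : Rule} {y : List Tok} (h : V (rep r) y) :
    y = [] ∨ ∃ m u, y = call r.1 :: (m ++ u) ∧ V (many r.2) m ∧ V (rep r) u := by
  generalize hi : rep r = i at h
  induction h with
  | rnil => exact Or.inl rfl
  | rsnoc h₁ h₂ ih _ =>
    cases hi
    right
    rcases ih rfl with rfl | ⟨m', u, rfl, hm', hu⟩
    · exact ⟨_, [], by simp, h₂, .rnil _⟩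
    · exact ⟨m', _, by simp, hm', hu.rsnoc h₂⟩
  | _ => simp at hi

theorem V.fire_rep {r : Rule} {s y : List Tok} (hs : V (one none) s) (hy : V (rep r) y) :
    V (one none) (s ++ y ++ [fire r]) := by
  rcases hy.rep_head with rfl | ⟨m, u, rfl, hm, hu⟩
  · simpa using hs.vain r
  · simpa using hs.piece (hm.real hu)

theorem V.fire_state {r : Rule} {x s y m : List Tok} (hs : V (one none) s) (hy : V (rep r) y)
    (hm : V (many r.2) m) (e : x ++ call r.1 :: r.2.map leaf = s ++ y ++ call r.1 :: m) :
    V (one none) (x ++ [fire r]) := by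
  rcases List.append_eq_append_iff.1 e with ⟨a, ha, hb⟩ | ⟨a, ha, hb⟩
  · rcases a with _ | ⟨b, a⟩
    · simp only [List.append_nil] at ha
      subst ha
      exact hs.fire_rep hy
    · rw [List.cons_append, List.cons.injEq] at hb
      exfalso
      have : call r.1 ∈ r.2.map leaf := by simp [hb.2]
      simp at this
  · rcases a with _ | ⟨b, p⟩
    · simp only [List.append_nil] at ha
      subst ha
      exact hs.fire_rep hy
    · rw [List.cons_append, List.cons.injEq] at hb
      obtain ⟨rfl, rfl⟩ := hb
      have hm' : V (many r.2) ((p ++ [call r.1]) ++ r.2.map leaf) := by simpa using hm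
      obtain ⟨X, Xs', hX, w, hw, hV⟩ := hm'.of_append_leaves (by simp)
      obtain ⟨rfl, hc⟩ := List.append_inj' hw rfl
      have hc : r.1 = X := by simpa using hc
      subst hc ha
      generalize hi : rep r = i at hy
      cases hy with
      | rnil => simpa using (hs.piece hV).vain r
      | rsnoc h₁ h₂ =>
        cases hi
        have := hs.fire_rep (h₁.rsnoc (h₂.absorb (by simp [hX]) hV))
        simpa using this
      | _ => simp at hi

/-- Interpretation of types as languages of tokens. -/
def sem : Fm → Language Tok
  | .pr 0 => {v | V (one none) v}
  | .pr (n + 1) => {v | ∃ X : NT, Encodable.encode X = n ∧ v = [call X]}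
  | .mul A B => sem A * sem B
  | .ldiv A B => {v | ∀ u ∈ sem A, u ++ v ∈ sem B}
  | .rdiv B A => {v | ∀ u ∈ sem A, v ++ u ∈ sem B}
  | .plus A => ⨆ n : ℕ, sem A ^ (n + 1)

theorem sem_sound {Γ : List Fm} {A : Fm} (h : DerLw Γ A) : (Γ.map sem).prod ≤ sem A := by
  induction h with
  | ax A => simp
  | @ldiv_r P A B _ _ ih =>
    intro v hv u hu
    exact ih (show u ++ v ∈ (List.map sem (A :: P)).prod by
      simpa using Language.append_mem_mul hu hv)
  | @ldiv_l P Γ Δ A B C _ _ ih₁ ih₂ =>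
    refine le_trans ?_ ih₂
    simp only [List.map_append, List.map_cons, List.prod_append, List.prod_cons, ← mul_assoc]
    refine mul_le_mul_left ?_ _
    rw [mul_assoc]
    refine mul_le_mul_right ?_ _
    rintro _ ⟨u, hu, v, hv, rfl⟩
    exact hv u (ih₁ hu)
  | @rdiv_r P A B _ _ ih =>
    intro v hv u hu
    exact ih (show v ++ u ∈ (List.map sem (P ++ [A])).prod by
      simpa using Language.append_mem_mul hv hu)
  | @rdiv_l P Γ Δ A B C _ _ ih₁ ih₂ =>
    refine le_trans ?_ ih₂
    simp only [List.map_append, List.map_cons, List.prod_append, List.prod_cons]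
    refine mul_le_mul_right ?_ _
    rw [← mul_assoc]
    refine mul_le_mul_left ?_ _
    rintro _ ⟨u, hu, v, hv, rfl⟩
    exact hu v (ih₁ hv)
  | mul_r _ _ ih₁ ih₂ =>
    rw [List.map_append, List.prod_append]
    exact mul_le_mul' ih₁ ih₂
  | mul_l _ ih => simpa [sem, mul_assoc] using ih
  | @plus_r A Ps hne _ ih =>
    have : (Ps.flatten.map sem).prod ≤ sem A ^ Ps.length := by
      clear hne
      induction Ps with
      | nil => simp
      | cons P Ps ih' =>
        rw [List.flatten_cons, List.map_append, List.prod_append, List.length_cons, pow_succ']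
        exact mul_le_mul' (ih P (by simp)) (ih' (by simp_all) fun Q hQ => ih Q (by simp [hQ]))
    refine this.trans ?_
    obtain ⟨n, hn⟩ := Nat.exists_eq_succ_of_ne_zero
      (fun h => hne (List.length_eq_zero_iff.1 h) : Ps.length ≠ 0)
    rw [hn]
    exact le_iSup (fun n : ℕ => sem A ^ (n + 1)) n
  | @plus_l Γ Δ A C _ ih =>
    simp only [List.map_append, List.map_cons, List.prod_append, List.prod_cons, sem]
    rw [Language.iSup_mul, Language.mul_iSup]
    refine iSup_le fun n => ?_
    have := ih (n + 1) (by omega)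
    simpa [mul_assoc] using this

theorem mem_sem_start {v : List Tok} : v ∈ sem start ↔ V (one none) v := Iff.rfl

theorem mem_sem_code {X : NT} {v : List Tok} : v ∈ sem (code X) ↔ v = [call X] := by
  constructor
  · rintro ⟨Y, hY, rfl⟩
    rw [Encodable.encode_injective hY]
  · rintro rfl
    exact ⟨X, rfl, rfl⟩

theorem mem_sem_hat {X : NT} {v : List Tok} : v ∈ sem (hat X) ↔ V (one (some X)) v := by
  constructor
  · intro h
    exact V.of_root_call (h [root, call X] (Language.append_mem_mul
      (a := [root]) (b := [call X]) (mem_sem_start.2 .start) (mem_sem_code.2 rfl)))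
  · rintro h _ ⟨s, hs, c, hc, rfl⟩
    rw [mem_sem_code.1 hc]
    have := (mem_sem_start.1 hs).piece h
    exact mem_sem_start.2 (by simpa using this)

theorem mem_sem_foldl {Xs : List NT} {F : Fm} {x : List Tok} :
    x ∈ sem ((Xs.map hat).foldl Fm.mul F) ↔ ∃ p m, p ∈ sem F ∧ V (many Xs) m ∧ x = p ++ m := by
  induction Xs generalizing F with
  | nil =>
    constructor
    · exact fun h => ⟨x, [], h, .nil, by simp⟩
    · rintro ⟨p, m, hp, hm, rfl⟩
      cases hm
      simpa using hp
  | cons X Xs ih =>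
    rw [List.map_cons, List.foldl_cons, ih]
    constructor
    · rintro ⟨_, m, ⟨p, hp, q, hq, rfl⟩, hm, rfl⟩
      exact ⟨p, q ++ m, hp, (mem_sem_hat.1 hq).cons hm, by simp⟩
    · rintro ⟨p, _, hp, hm, rfl⟩
      cases hm with
      | @cons _ _ v w h₁ h₂ =>
        exact ⟨p ++ v, w, Language.append_mem_mul hp (mem_sem_hat.2 h₁), h₂, by simp⟩

theorem mem_sem_body {r : Rule} {x : List Tok} :
    x ∈ sem (body r) ↔ ∃ m, V (many r.2) m ∧ x = call r.1 :: m := by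
  rw [body, mem_sem_foldl]
  constructor
  · rintro ⟨p, m, hp, hm, rfl⟩
    exact ⟨m, hm, by simp [mem_sem_code.1 hp]⟩
  · rintro ⟨m, hm, rfl⟩
    exact ⟨_, m, mem_sem_code.2 rfl, hm, rfl⟩

theorem rep_of_mem_pow {r : Rule} {n : ℕ} {x : List Tok} (h : x ∈ sem (body r) ^ n) :
    V (rep r) x := by
  induction n generalizing x with
  | zero =>
    rw [pow_zero, Language.mem_one] at h
    exact h ▸ .rnil r
  | succ n ih =>
    rw [pow_succ] at h
    obtain ⟨y, hy, z, hz, rfl⟩ := h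
    obtain ⟨m, hm, rfl⟩ := mem_sem_body.1 hz
    exact (ih hy).rsnoc hm

theorem fire_mem_sem_trig (r : Rule) : [fire r] ∈ sem (trig r) := by
  intro x hx
  have h := hx (call r.1 :: r.2.map leaf) (mem_sem_body.2 ⟨_, by
    induction r.2 with
    | nil => exact .nil
    | cons X Xs ih => exact (V.gen X).cons ih, rfl⟩)
  obtain ⟨s, hs, z, hz, e⟩ := h
  obtain ⟨n, hn⟩ := Language.mem_iSup.1 hz
  rw [pow_succ] at hn
  obtain ⟨y, hy, b, hb, rfl⟩ := hn
  obtain ⟨m, hm, rfl⟩ := mem_sem_body.1 hb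
  exact (mem_sem_start.1 hs).fire_state (rep_of_mem_pow hy) hm (by simpa using e.symm)

/-- The words denoted by an extended nonterminal. -/
def Denotes (G : CFG) : NT → List Bool → Prop
  | .inl X, w => Gen G [X] w
  | .inr (A, X), u => ∀ w, Gen G [X] w → Gen G [Sum.inr A] (u ++ w)

theorem gen_of_forall₂ {G : CFG} {α : List GSym} {ws : List (List Bool)}
    (h : List.Forall₂ (Denotes G) (α.map sym) ws) : Gen G α ws.flatten := by
  rw [List.forall₂_map_left_iff] at h
  induction h with
  | nil => exact .nil
  | cons h _ ih => exact Gen.append (α := [_]) h ih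

theorem gen_rule {G : CFG} {r : ℕ × List GSym} (hr : r ∈ G.2) {w : List Bool}
    (h : Gen G r.2 w) : Gen G [Sum.inr r.1] w := by
  simpa using Gen.rule hr h .nil

theorem mem_of_mem_allOrders {L : List Rule} {r : Rule} (h : r ∈ allOrders L) : r ∈ L := by
  induction L with
  | nil => exact h
  | cons s L ih =>
    have h' : r ∈ allOrders L ++ s :: allOrders L := h
    simp only [List.mem_append, List.mem_cons] at h' ⊢
    tauto

theorem denotes_rule {G : CFG} (hG : EpsFree G) {s : Rule} (hs : s ∈ rules G)
    {ws : List (List Bool)} (h : List.Forall₂ (Denotes G) s.2 ws) :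
    Denotes G s.1 ws.flatten := by
  have hext : s ∈ extendRules G → Denotes G s.1 ws.flatten := by
    intro hs
    obtain ⟨q, hq, hs⟩ := List.mem_flatMap.1 hs
    obtain ⟨r, hr, rfl⟩ := List.mem_map.1 hs
    intro w hw
    cases h with
    | @cons _ u _ us h₁ h₂ =>
      have := h₁ (us.flatten ++ w) (gen_rule hr (by
        rw [← initSyms_append_lastSym (hG r hr)]
        exact (gen_of_forall₂ h₂).append hw))
      simpa using this
  simp only [rules, List.mem_append] at hs
  rcases hs with ((hs | hs) | hs | hs) | hs
  · obtain ⟨r, hr, hs⟩ := List.mem_flatMap.1 hs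
    obtain ⟨a, rfl⟩ : ∃ a, s = (sym (Sum.inr r.1), [pair r.1 (Sum.inl a), sym (Sum.inl a)]) := by
      simpa [or_comm] using hs
    cases h with
    | cons h₁ h₂ =>
      cases h₂ with
      | cons h₂ h₃ =>
        cases h₃
        simpa [Denotes] using h₁ _ h₂
  · obtain ⟨r, hr, rfl⟩ := List.mem_map.1 (mem_of_mem_allOrders hs)
    exact gen_rule hr (gen_of_forall₂ h)
  · obtain ⟨r, hr, rfl⟩ := List.mem_map.1 hs
    intro w hw
    refine gen_rule hr ?_
    rw [← initSyms_append_lastSym (hG r hr)]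
    exact (gen_of_forall₂ h).append hw
  · exact hext hs
  · exact hext (mem_of_mem_allOrders hs)

/-- The letters recorded by a token. -/
def letters : Tok → List Bool
  | .leaf (.inl (.inl a)) => [a]
  | _ => []

/-- The tokens used to interpret blocks. -/
def blockToks (rs : List Rule) (a : Bool) : List Tok :=
  leaf (sym (Sum.inl a)) :: rs.map fire

/-- Tokens occurring in blocks. -/
def IsBlockTok (rs : List Rule) : Tok → Prop
  | .leaf X => ∃ a, X = sym (Sum.inl a)
  | .fire r => r ∈ rs
  | _ => False

/-- What a block-token word of a given category says about the grammar. -/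
def Yields (G : CFG) : Cat → List Tok → Prop
  | .one none, _ => True
  | .one (some X), v => Denotes G X (v.flatMap letters)
  | .many Xs, v => ∃ ws, List.Forall₂ (Denotes G) Xs ws ∧ v.flatMap letters = ws.flatten
  | .rep _, v => v = []

theorem V.yields {G : CFG} (hG : EpsFree G) {i : Cat} {v : List Tok} (h : V i v)
    (hv : ∀ x ∈ v, IsBlockTok (rules G) x) : Yields G i v := by
  induction h with
  | start => trivial
  | gen X =>
    obtain ⟨a, rfl⟩ := hv (leaf X) (by simp)
    exact Gen.letter .nil
  | @piece o Y v v' => exact (hv (call Y) (by simp)).elim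
  | @vain o v r _ ih =>
    have := ih fun x hx => hv x (by simp [hx])
    cases o with
    | none => trivial
    | some X => simpa [Yields, letters] using this
  | nil => exact ⟨[], .nil, rfl⟩
  | cons _ _ ih₁ ih₂ =>
    obtain ⟨ws, h, e⟩ := ih₂ fun x hx => hv x (by simp [hx])
    exact ⟨_ :: ws, .cons (ih₁ fun x hx => hv x (by simp [hx])) h, by simp [e]⟩
  | rnil => rfl
  | @rsnoc r => exact (hv (call r.1) (by simp)).elim
  | @real r m u _ _ ih₁ ih₂ =>
    obtain ⟨ws, h, e⟩ := ih₁ fun x hx => hv x (by simp [hx])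
    have hu : u = [] := ih₂ fun x hx => hv x (by simp [hx])
    subst hu
    have := denotes_rule hG (hv (fire r) (by simp)) h
    simpa [Yields, letters, e] using this

theorem blockToks_mem_sem (rs : List Rule) (a : Bool) : blockToks rs a ∈ sem (blockFm rs a) := by
  have key : ∀ (F : Fm) (p : List Tok), p ∈ sem F →
      p ++ rs.map fire ∈ sem ((rs.map trig).foldl Fm.mul F) := by
    induction rs with
    | nil => intro F p hp; simpa using hp
    | cons r rs ih =>
      intro F p hp
      have := ih (Fm.mul F (trig r)) (p ++ [fire r])
        (Language.append_mem_mul hp (fire_mem_sem_trig r))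
      simpa using this
  exact key _ [_] (mem_sem_hat.2 (V.gen _))

theorem flatMap_replicate_mem_pow {α : Type*} {L : Language α} {β : Type*} {g : β → List α} {a : β}
    (h : g a ∈ L) (n : ℕ) : (List.replicate n a).flatMap g ∈ L ^ n := by
  induction n with
  | zero => simp
  | succ n ih =>
    rw [pow_succ', List.replicate_succ, List.flatMap_cons]
    exact Language.append_mem_mul h ih

theorem mem_sem_plus {A : Fm} {n : ℕ} (hn : 1 ≤ n) {v : List Tok} (h : v ∈ sem A ^ n) :
    v ∈ sem (Fm.plus A) := by
  obtain ⟨n, rfl⟩ := Nat.exists_eq_add_of_le' hn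
  exact Language.mem_iSup.2 ⟨n, h⟩

theorem groupWord_mem_sem (rs : List Rule) {l : List (ℕ × ℕ)}
    (hl : ∀ p ∈ l, 1 ≤ p.1 ∧ 1 ≤ p.2) :
    (groupWord l).flatMap (blockToks rs) ∈ sem (groupFm rs) ^ l.length := by
  induction l with
  | nil => simp [groupWord]
  | cons p l ih =>
    have h₁ : (List.replicate p.1 false).flatMap (blockToks rs) ++
        (List.replicate p.2 true).flatMap (blockToks rs) ∈ sem (groupFm rs) :=
      Language.append_mem_mul
        (mem_sem_plus (hl p (by simp)).1 (flatMap_replicate_mem_pow (blockToks_mem_sem rs _) _))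
        (mem_sem_plus (hl p (by simp)).2 (flatMap_replicate_mem_pow (blockToks_mem_sem rs _) _))
    rw [List.length_cons, pow_succ']
    have := Language.append_mem_mul h₁ (ih fun q hq => hl q (by simp [hq]))
    simpa [groupWord] using this

theorem isBlockTok_of_mem {rs : List Rule} {w : List Bool} {x : Tok}
    (h : x ∈ w.flatMap (blockToks rs)) : IsBlockTok rs x := by
  obtain ⟨a, _, h⟩ := List.mem_flatMap.1 h
  rcases List.mem_cons.1 h with rfl | h
  · exact ⟨a, rfl⟩
  · obtain ⟨r, hr, rfl⟩ := List.mem_map.1 h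
    exact hr

theorem letters_blockToks (rs : List Rule) (w : List Bool) :
    (w.flatMap (blockToks rs)).flatMap letters = w := by
  have h : ∀ rs : List Rule, (rs.map fire).flatMap letters = [] := by
    intro rs
    induction rs <;> simp_all [letters]
  induction w with
  | nil => rfl
  | cons a w ih =>
    rw [List.flatMap_cons, List.flatMap_append, ih, blockToks, List.flatMap_cons, h]
    rfl

theorem altLang_subset_of_derLw {G : CFG} (hG : EpsFree G)
    (h : DerLw (toSequent G).1 (toSequent G).2) : AltLang ⊆ Lang G := by
  rintro _ ⟨l, hne, hl, rfl⟩
  change groupWord l ∈ Lang G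
  have hw := mem_sem_plus (List.length_pos_iff.2 hne) (groupWord_mem_sem (rules G) hl)
  have h₁ : [root] ++ ([call (sym (Sum.inr G.1))] ++ (groupWord l).flatMap (blockToks (rules G))) ∈
      sem start * (sem (code (sym (Sum.inr G.1))) * sem (Fm.plus (groupFm (rules G)))) :=
    Language.append_mem_mul (mem_sem_start.2 .start)
      (Language.append_mem_mul (mem_sem_code.2 rfl) hw)
  have h₂ := sem_sound h (show _ ∈ ((toSequent G).1.map sem).prod by simpa [toSequent] using h₁)
  have h₃ := (V.of_root_call (mem_sem_start.1 h₂)).yields hG fun x hx => isBlockTok_of_mem hx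
  rw [Yields, letters_blockToks] at h₃
  exact mem_lang_iff.2 h₃

theorem encodeFm_foldl_mul (F : Fm) (Fs : List Fm) :
    encodeFm (Fs.foldl Fm.mul F) =
      (Fs.map encodeFm).foldl (fun a b => Nat.pair 1 (Nat.pair a b)) (encodeFm F) := by
  induction Fs generalizing F with
  | nil => rfl
  | cons A Fs ih => exact ih _

section Codes

variable {α : Type*} [Primcodable α]

theorem primrec_pair_const {f : α → ℕ} (n : ℕ) (hf : Primrec f) :
    Primrec fun a => Nat.pair n (f a) :=
  Primrec₂.natPair.comp (Primrec.const n) hf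

theorem primrec_pair_pair {f g : α → ℕ} (hf : Primrec f) (hg : Primrec g) (n : ℕ) :
    Primrec fun a => Nat.pair n (Nat.pair (f a) (g a)) :=
  primrec_pair_const n (Primrec₂.natPair.comp hf hg)

theorem primrec_encode_foldl {F : α → Fm} {β : Type*} [Primcodable β] {l : α → List β}
    {g : β → Fm} (hF : Primrec fun a => encodeFm (F a)) (hl : Primrec l)
    (hg : Primrec fun b => encodeFm (g b)) :
    Primrec fun a => encodeFm (((l a).map g).foldl Fm.mul (F a)) := by
  simp only [encodeFm_foldl_mul, List.map_map]
  refine Primrec.list_foldl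
    (h := fun _ p => Nat.pair 1 (Nat.pair p.1 p.2))
    (Primrec.list_map hl (hg.comp Primrec.snd).to₂) hF ?_
  exact primrec_pair_pair (Primrec.fst.comp Primrec.snd) (Primrec.snd.comp Primrec.snd) 1

end Codes

theorem primrec_code : Primrec fun X : NT => encodeFm (code X) :=
  primrec_pair_const 0 (Primrec.succ.comp Primrec.encode)

theorem primrec_hat : Primrec fun X : NT => encodeFm (hat X) :=
  primrec_pair_pair (primrec_pair_pair (Primrec.const (encodeFm start)) primrec_code 1)
    (Primrec.const (encodeFm start)) 2

theorem primrec_body : Primrec fun r : Rule => encodeFm (body r) :=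
  primrec_encode_foldl (primrec_code.comp Primrec.fst) Primrec.snd primrec_hat

theorem primrec_trig : Primrec fun r : Rule => encodeFm (trig r) :=
  primrec_pair_pair (primrec_pair_pair (primrec_pair_pair (Primrec.const (encodeFm start))
    (primrec_pair_const 4 primrec_body) 1) primrec_body 3) (Primrec.const (encodeFm start)) 2

theorem primrec_blockFm (a : Bool) : Primrec fun rs : List Rule => encodeFm (blockFm rs a) :=
  primrec_encode_foldl (Primrec.const (encodeFm (hat (sym (Sum.inl a))))) Primrec.id primrec_trig

theorem primrec_groupFm : Primrec fun rs : List Rule => encodeFm (groupFm rs) :=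
  primrec_pair_pair (primrec_pair_const 4 (primrec_blockFm false))
    (primrec_pair_const 4 (primrec_blockFm true)) 1

theorem primrec_allOrders : Primrec allOrders :=
  Primrec.list_foldr Primrec.id (Primrec.const [])
    (Primrec.list_append.comp (Primrec.snd.comp Primrec.snd)
      (Primrec.list_cons.comp (Primrec.fst.comp Primrec.snd) (Primrec.snd.comp Primrec.snd))).to₂

theorem primrec_lastSym : Primrec lastSym :=
  Primrec.list_headI.comp (Primrec.list_reverse.comp Primrec.snd)

theorem primrec_initSyms : Primrec initSyms :=
  Primrec.list_reverse.comp (Primrec.list_tail.comp (Primrec.list_reverse.comp Primrec.snd))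

theorem primrec_map_sym : Primrec fun l : List GSym => l.map sym :=
  Primrec.list_map Primrec.id (Primrec.sumInl.comp Primrec.snd).to₂

theorem primrec_pair {α : Type*} [Primcodable α] {f : α → ℕ} {g : α → GSym} (hf : Primrec f)
    (hg : Primrec g) : Primrec fun a => pair (f a) (g a) :=
  Primrec.sumInr.comp (hf.pair hg)

theorem primrec_symNat {α : Type*} [Primcodable α] {f : α → ℕ} (hf : Primrec f) :
    Primrec fun a => (sym (Sum.inr (f a)) : NT) :=
  Primrec.sumInl.comp (Primrec.sumInr.comp hf)

theorem primrec_closeRules : Primrec closeRules := by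
  have key : ∀ a : Bool, Primrec fun r : ℕ × List GSym =>
      (((sym (Sum.inr r.1) : NT), [pair r.1 (Sum.inl a), sym (Sum.inl a)]) : Rule) := fun a =>
    (primrec_symNat Primrec.fst).pair
      (Primrec.list_cons.comp (primrec_pair Primrec.fst (Primrec.const (Sum.inl a)))
        (Primrec.const [sym (Sum.inl a)]))
  exact Primrec.list_flatMap Primrec.snd ((Primrec.list_cons.comp (key false)
    (Primrec.list_cons.comp (key true) (Primrec.const []))).comp Primrec.snd).to₂

theorem primrec_ownRules : Primrec ownRules :=
  Primrec.list_map Primrec.snd (((primrec_symNat Primrec.fst).pair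
    (primrec_map_sym.comp Primrec.snd)).comp Primrec.snd).to₂

theorem primrec_openRules : Primrec openRules :=
  Primrec.list_map Primrec.snd (((primrec_pair Primrec.fst primrec_lastSym).pair
    (primrec_map_sym.comp primrec_initSyms)).comp Primrec.snd).to₂

theorem primrec_extendRules : Primrec extendRules := by
  have hq : Primrec fun x : (CFG × (ℕ × List GSym)) × (ℕ × List GSym) => x.1.2.1 :=
    Primrec.fst.comp (Primrec.snd.comp Primrec.fst)
  have hr : Primrec fun x : (CFG × (ℕ × List GSym)) × (ℕ × List GSym) => x.2 := Primrec.snd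
  refine Primrec.list_flatMap Primrec.snd (Primrec.list_map
    (g := fun (x : CFG × (ℕ × List GSym)) r =>
      (pair x.2.1 (lastSym r), pair x.2.1 (Sum.inr r.1) :: (initSyms r).map sym))
    (Primrec.snd.comp Primrec.fst) ?_).to₂
  exact ((primrec_pair hq (primrec_lastSym.comp hr)).pair (Primrec.list_cons.comp
    (primrec_pair hq (Primrec.sumInr.comp (Primrec.fst.comp hr)))
    (primrec_map_sym.comp (primrec_initSyms.comp hr)))).to₂

theorem primrec_rules : Primrec rules :=
  Primrec.list_append.comp (Primrec.list_append.comp (Primrec.list_append.comp primrec_closeRules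
    (primrec_allOrders.comp primrec_ownRules))
      (Primrec.list_append.comp primrec_openRules primrec_extendRules))
    (primrec_allOrders.comp primrec_extendRules)

theorem primrec_toSequent : Primrec fun G => encodeSeq (toSequent G) := by
  have h : Primrec fun G : CFG => [encodeFm start, encodeFm (code (sym (Sum.inr G.1))),
      encodeFm (Fm.plus (groupFm (rules G)))] :=
    Primrec.list_cons.comp (Primrec.const _) (Primrec.list_cons.comp
      (primrec_code.comp (primrec_symNat Primrec.fst)) (Primrec.list_cons.comp
        (primrec_pair_const 4 (primrec_groupFm.comp primrec_rules)) (Primrec.const [])))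
  exact Primrec₂.natPair.comp (Primrec.encode.comp h) (Primrec.const (encodeFm start))

theorem computable_toSequent : ∃ F : ℕ → ℕ, Computable F ∧
    ∀ G : CFG, F (Encodable.encode G) = encodeSeq (toSequent G) := by
  refine ⟨fun n => Option.casesOn (Encodable.decode (α := CFG) n) 0
    fun G => encodeSeq (toSequent G), ?_, fun G => ?_⟩
  · exact (Primrec.option_casesOn Primrec.decode (Primrec.const 0)
      (primrec_toSequent.comp Primrec.snd).to₂).to_comp
  · simp only [Encodable.encodek]

end AltRed

/-- There is a computable function `f` from ε-free context-free grammars over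
`{b, c}` to sequents such that the language of `G` includes `(b⁺c⁺)⁺` iff
`f G` is derivable in L⁺_ω. -/
theorem alt_reduces_to_derivability :
    ∃ f : CFG → List Fm × Fm,
      (∃ F : ℕ → ℕ, Computable F ∧
        ∀ G : CFG, F (Encodable.encode G) = encodeSeq (f G)) ∧
      ∀ G : CFG, EpsFree G →
        (AltLang ⊆ Lang G ↔ DerLw (f G).1 (f G).2) :=
  ⟨AltRed.toSequent, AltRed.computable_toSequent, fun _ hG =>
    ⟨AltRed.derLw_toSequent hG, AltRed.altLang_subset_of_derLw hG⟩⟩
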